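/- arXiv:1307.5361 — 2 statements merged into one kernel-verified Lean document; each statement's English description precedes it below -/
import Mathlib

section
/- Let w(x) = x^{0.195}(1−x)^{0.195} on [0,1]. Then there exists a constant C > 0 such that for all sufficiently large x, ∫_1^x ψ(t) dt ≥ 0.99035 · x²/2 − C·x·(log x)². -/
open MeasureTheory Filter Set

/-- Chebyshev's function `ψ(x) = ∑_{p^m ≤ x} log p`, written as a sum of the
von Mangoldt function over integers up to `x`. -/
noncomputable def chebyshevPsi (x : ℝ) : ℝ :=
  ∑ n ∈ Finset.Icc 1 ⌊x⌋₊, ArithmeticFunction.vonMangoldt n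

/-!
Chebyshev's method, averaged over `t`. For integer weights `c` on the divisors of `L`, put
`F j = ∑ c m ⌊j / m⌋`. Since `log k! = ∑ Λ n ⌊k / n⌋`, we have
`∑ c m log ⌊t / m⌋! = ∑ Λ n F ⌊t / n⌋`. If `∑ c m / m = 0`, then Stirling's formula makes the left
side `κ t + O(log t)` with `κ = -∑ c m log m / m`, while `F` is `L`-periodic. Summing the right side
over `t < N` leaves the averages `∑_{t < N} F ⌊t / n⌋`, and
`∑_{t < N} ψ t = ∑ Λ n (N - n)`. So instead of the pointwise bound `F ≤ A`, which is what a lower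
bound for `ψ` itself would need, it is enough that the partial sums satisfy
`∑_{j < q} F j ≤ A (q - 1)` for `1 ≤ q ≤ L`; this gives `∫ ψ ≥ (κ / A) x² / 2 - O(x log x)`.
-/

section PartialSums

lemma sum_range_div {M : Type*} [AddCommMonoid M] (f : ℕ → M) (n N : ℕ) :
    ∑ t ∈ Finset.range N, f (t / n) =
      n • ∑ j ∈ Finset.range (N / n), f j + (N % n) • f (N / n) := by
  rcases n.eq_zero_or_pos with rfl | hn
  · simp
  have sum_block (q r : ℕ) (hr : r ≤ n) :
      ∑ i ∈ Finset.range r, f ((n * q + i) / n) = r • f q := by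
    rw [Finset.sum_congr rfl fun i hi => by
      rw [Nat.mul_add_div hn, Nat.div_eq_of_lt ((Finset.mem_range.1 hi).trans_le hr), add_zero],
      Finset.sum_const, Finset.card_range]
  have sum_blocks (q : ℕ) :
      ∑ t ∈ Finset.range (n * q), f (t / n) = n • ∑ j ∈ Finset.range q, f j := by
    induction q with
    | zero => simp
    | succ q ih =>
      rw [mul_add_one, Finset.sum_range_add, ih, sum_block q n le_rfl, Finset.sum_range_succ,
        smul_add]
  conv_lhs => rw [← N.div_add_mod n, Finset.sum_range_add, sum_blocks,
    sum_block _ _ (N.mod_lt hn).le]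

variable {R : Type*} [CommRing R] [LinearOrder R] [IsStrictOrderedRing R] {f : ℕ → R} {A : R}

-- With `S q = ∑_{j < q} f j` and `N = n q + r`, the sum interpolates: it is
-- `(n - r) S q + r S (q + 1)`.
lemma sum_range_div_le {n N : ℕ} (hn : 0 < n) (hnN : n ≤ N)
    (hf : ∀ q : ℕ, 1 ≤ q → ∑ j ∈ Finset.range q, f j ≤ A * (q - 1)) :
    ∑ t ∈ Finset.range N, f (t / n) ≤ A * (N - n) := by
  have hq := hf (N / n) ((Nat.one_le_div_iff hn).2 hnN)
  have hq_succ := hf (N / n + 1) (Nat.le_add_left _ _)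
  have hr : ((N % n : ℕ) : R) ≤ n := by exact_mod_cast (N.mod_lt hn).le
  have hN : (n : R) * (N / n : ℕ) + (N % n : ℕ) = N := by exact_mod_cast N.div_add_mod n
  calc ∑ t ∈ Finset.range N, f (t / n)
      = (n - (N % n : ℕ)) * ∑ j ∈ Finset.range (N / n), f j
          + (N % n : ℕ) * ∑ j ∈ Finset.range (N / n + 1), f j := by
        rw [sum_range_div, Finset.sum_range_succ, nsmul_eq_mul, nsmul_eq_mul]
        ring
    _ ≤ (n - (N % n : ℕ)) * (A * ((N / n : ℕ) - 1))
          + (N % n : ℕ) * (A * ((N / n + 1 : ℕ) - 1)) := by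
        have := sub_nonneg.2 hr
        gcongr
    _ = A * (N - n) := by
        rw [← hN]
        push_cast
        ring

lemma sum_range_le_of_periodic {L : ℕ} (hL : 0 < L) (hA : 0 ≤ A) (hper : Function.Periodic f L)
    (hf : ∀ q ∈ Finset.Icc 1 L, ∑ j ∈ Finset.range q, f j ≤ A * ((q : R) - 1)) (q : ℕ)
    (hq : 1 ≤ q) : ∑ j ∈ Finset.range q, f j ≤ A * (q - 1) := by
  induction q using Nat.strong_induction_on with
  | _ q ih =>
    rcases le_or_gt q L with hqL | hLq
    · exact hf q (Finset.mem_Icc.2 ⟨hq, hqL⟩)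
    obtain ⟨r, rfl⟩ := Nat.exists_eq_add_of_lt hLq
    have hperiod := hf L (Finset.mem_Icc.2 ⟨hL, le_rfl⟩)
    have hrest := ih (r + 1) (by lia) (Nat.le_add_left _ _)
    rw [add_assoc, Finset.sum_range_add]
    simp only [add_comm L, hper _]
    push_cast at hrest ⊢
    linarith

end PartialSums

section LogFactorial

open scoped Nat

lemma mul_log_le_mul_log_add_sub {a b : ℝ} (ha : 0 ≤ a) (hb : 0 < b) :
    a * Real.log b ≤ a * Real.log a + b - a := by
  rcases ha.eq_or_lt with rfl | ha
  · simpa using hb.le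
  have h := mul_le_mul_of_nonneg_left (Real.log_le_sub_one_of_pos (div_pos hb ha)) ha.le
  rw [Real.log_div hb.ne' ha.ne', mul_sub, mul_sub, mul_div_cancel₀ b ha.ne'] at h
  linarith

lemma mul_log_sub_le_log_factorial (k : ℕ) : k * Real.log k - k ≤ Real.log k ! := by
  rcases eq_or_ne k 0 with rfl | hk
  · simp
  have log_two_pi_nonneg : 0 ≤ Real.log (2 * Real.pi) :=
    Real.log_nonneg (by linarith [Real.pi_gt_three])
  linarith [Stirling.le_log_factorial_stirling hk, Real.log_natCast_nonneg k]

lemma log_factorial_le (k : ℕ) : Real.log k ! ≤ (k + 1) * Real.log (k + 1) - k := by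
  induction k with
  | zero => simp
  | succ k ih =>
    have := mul_log_le_mul_log_add_sub (a := k + 1 + 1) (b := k + 1) (by positivity) (by positivity)
    rw [Nat.factorial_succ, Nat.cast_mul, Real.log_mul (by positivity) (by positivity)]
    push_cast
    linarith

lemma abs_log_factorial_floor_sub_le {u : ℝ} (hu : 0 ≤ u) :
    |Real.log ⌊u⌋₊! - (u * Real.log u - u)| ≤ 1 + Real.log (u + 1) := by
  rcases hu.eq_or_lt with rfl | hu
  · simp
  have hku := Nat.floor_le hu.le
  have huk := Nat.lt_floor_add_one u
  set k : ℝ := (⌊u⌋₊ : ℝ)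
  have hk : 0 ≤ k := Nat.cast_nonneg _
  have log_succ_nonneg : 0 ≤ Real.log (u + 1) := Real.log_nonneg (by linarith)
  have lower : (u - k) * Real.log u ≤ Real.log (u + 1) := calc
    (u - k) * Real.log u ≤ (u - k) * Real.log (u + 1) := by
      gcongr
      linarith
    _ ≤ Real.log (u + 1) := mul_le_of_le_one_left log_succ_nonneg (by linarith)
  have upper : (k + 1 - u) * Real.log (k + 1) ≤ Real.log (u + 1) := calc
    (k + 1 - u) * Real.log (k + 1) ≤ (k + 1 - u) * Real.log (u + 1) := by gcongr
    _ ≤ Real.log (u + 1) := mul_le_of_le_one_left log_succ_nonneg (by linarith)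
  rw [abs_le]
  constructor
  · linarith [mul_log_sub_le_log_factorial ⌊u⌋₊, mul_log_le_mul_log_add_sub hk hu]
  · linarith [log_factorial_le ⌊u⌋₊, mul_log_le_mul_log_add_sub hu.le (by positivity : 0 < k + 1)]

open ArithmeticFunction in
lemma log_factorial_eq_sum_vonMangoldt_mul_div {k N : ℕ} (hkN : k ≤ N) :
    Real.log k ! = ∑ n ∈ Finset.Ioc 0 N, vonMangoldt n * (k / n : ℕ) := by
  have log_factorial_eq_sum_log : Real.log k ! = ∑ n ∈ Finset.Ioc 0 k, Real.log n := by
    rw [← Finset.prod_Ico_id_eq_factorial, Nat.cast_prod, Real.log_prod]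
    · rfl
    · exact fun n hn => Nat.cast_ne_zero.2 (Nat.one_le_iff_ne_zero.1 (Finset.mem_Ico.1 hn).1)
  calc Real.log k ! = ∑ n ∈ Finset.Ioc 0 k, (vonMangoldt * zeta) n := by
        rw [log_factorial_eq_sum_log, vonMangoldt_mul_zeta]
        rfl
    _ = ∑ n ∈ Finset.Ioc 0 k, vonMangoldt n * (k / n : ℕ) := sum_Ioc_mul_zeta_eq_sum _ _
    _ = ∑ n ∈ Finset.Ioc 0 N, vonMangoldt n * (k / n : ℕ) := by
        refine Finset.sum_subset (Finset.Ioc_subset_Ioc_right hkN) fun n hn hnk => ?_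
        simp only [Finset.mem_Ioc] at hn hnk
        rw [Nat.div_eq_of_lt (by lia), Nat.cast_zero, mul_zero]

end LogFactorial

section Floor

lemma sum_Ico_floor_le_integral {f : ℝ → ℝ} (hf : Monotone f) (hf₀ : 0 ≤ f) {a : ℕ} {x : ℝ}
    (hax : a ≤ x) : ∑ t ∈ Finset.Ico a ⌊x⌋₊, f t ≤ ∫ t in (a : ℝ)..x, f t := by
  have hfloor : (⌊x⌋₊ : ℝ) ≤ x := Nat.floor_le (a.cast_nonneg.trans hax)
  calc ∑ t ∈ Finset.Ico a ⌊x⌋₊, f t ≤ ∫ t in (a : ℝ)..⌊x⌋₊, f t :=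
        MonotoneOn.sum_le_integral_Ico (Nat.le_floor hax) (hf.monotoneOn _)
    _ ≤ (∫ t in (a : ℝ)..⌊x⌋₊, f t) + ∫ t in (⌊x⌋₊ : ℝ)..x, f t :=
        le_add_of_nonneg_right (intervalIntegral.integral_nonneg hfloor fun t _ => hf₀ t)
    _ = ∫ t in (a : ℝ)..x, f t :=
        intervalIntegral.integral_add_adjacent_intervals hf.intervalIntegrable hf.intervalIntegrable

lemma abs_sq_sub_floor_mul_floor_sub_one_le {x : ℝ} (hx : 0 ≤ x) :
    |x ^ 2 - ⌊x⌋₊ * (⌊x⌋₊ - 1)| ≤ 3 * x := by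
  have hle := Nat.floor_le hx
  have hlt := Nat.lt_floor_add_one x
  rw [abs_le]
  constructor <;> nlinarith [(Nat.cast_nonneg ⌊x⌋₊ : (0 : ℝ) ≤ ⌊x⌋₊)]

lemma mul_sq_sub_le_mul_floor_mul_floor_sub_one (κ : ℝ) {x : ℝ} (hx : 0 ≤ x) :
    κ * x ^ 2 - |κ| * (3 * x) ≤ κ * (⌊x⌋₊ * (⌊x⌋₊ - 1)) := by
  rw [sub_le_comm, ← mul_sub]
  calc κ * (x ^ 2 - ⌊x⌋₊ * (⌊x⌋₊ - 1)) ≤ |κ| * |x ^ 2 - ⌊x⌋₊ * (⌊x⌋₊ - 1)| :=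
        (le_abs_self _).trans (abs_mul _ _).le
    _ ≤ |κ| * (3 * x) := by
        gcongr
        exact abs_sq_sub_floor_mul_floor_sub_one_le hx

lemma log_floor_add_one_le_two_mul_log {x : ℝ} (hx : 2 ≤ x) :
    Real.log (⌊x⌋₊ + 1) ≤ 2 * Real.log x := by
  have hfloor : (⌊x⌋₊ : ℝ) ≤ x := Nat.floor_le (by linarith)
  rw [← Nat.cast_two, ← Real.log_pow]
  exact Real.log_le_log (by positivity) (by nlinarith)

end Floor

/-- Chebyshev's step function `j ↦ ∑_{m ∣ L} c m ⌊j / m⌋` with integer weights `c` on the divisors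
of `L`. -/
def floorSum (L : ℕ) (c : ℕ → ℤ) (j : ℕ) : ℤ :=
  ∑ m ∈ L.divisors, c m * (j / m : ℕ)

/-- The combination `∑_{m ∣ L} c m log ⌊t / m⌋!` of log-factorials, which is the sum of the
von Mangoldt function against `floorSum`. -/
noncomputable def logFactorialSum (L : ℕ) (c : ℕ → ℤ) (t : ℕ) : ℝ :=
  ∑ m ∈ L.divisors, c m * Real.log (t / m).factorial

/-- The slope `-∑_{m ∣ L} c m log m / m` of the linear main term of `logFactorialSum L c`. -/
noncomputable def chebyshevConstant (L : ℕ) (c : ℕ → ℤ) : ℝ :=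
  -∑ m ∈ L.divisors, c m / m * Real.log m

section ChebyshevMethod

open ArithmeticFunction (vonMangoldt)
open Chebyshev (psi)

variable {L : ℕ} {c : ℕ → ℤ} {A : ℤ}

lemma floorSum_periodic (hc : floorSum L c L = 0) : Function.Periodic (floorSum L c) L := by
  intro j
  rw [← add_zero (floorSum L c j), ← hc]
  simp only [floorSum]
  rw [← Finset.sum_add_distrib]
  refine Finset.sum_congr rfl fun m hm => ?_
  rw [Nat.add_div_of_dvd_left (Nat.dvd_of_mem_divisors hm), Nat.cast_add, mul_add]

lemma sum_weight_div_eq_zero (hc : floorSum L c L = 0) :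
    ∑ m ∈ L.divisors, (c m : ℝ) / m = 0 := by
  rcases eq_or_ne L 0 with rfl | hL
  · simp
  have hL' : (L : ℝ) ≠ 0 := Nat.cast_ne_zero.2 hL
  refine (mul_eq_zero.1 ?_).resolve_left hL'
  calc (L : ℝ) * ∑ m ∈ L.divisors, (c m : ℝ) / m
      = ∑ m ∈ L.divisors, (c m : ℝ) * (L / m : ℕ) := by
        rw [Finset.mul_sum]
        refine Finset.sum_congr rfl fun m hm => ?_
        rw [Nat.cast_div_charZero (Nat.dvd_of_mem_divisors hm)]
        ring
    _ = (floorSum L c L : ℝ) := by simp only [floorSum]; push_cast; rfl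
    _ = 0 := by rw [hc, Int.cast_zero]

lemma logFactorialSum_eq_sum_vonMangoldt_mul_floorSum {t N : ℕ} (htN : t ≤ N) :
    logFactorialSum L c t =
      ∑ n ∈ Finset.Ioc 0 N, vonMangoldt n * (floorSum L c (t / n) : ℝ) := by
  simp only [logFactorialSum, floorSum, Int.cast_sum, Finset.mul_sum]
  rw [Finset.sum_comm]
  refine Finset.sum_congr rfl fun m _ => ?_
  rw [log_factorial_eq_sum_vonMangoldt_mul_div ((t.div_le_self m).trans htN), Finset.mul_sum]
  refine Finset.sum_congr rfl fun n _ => ?_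
  rw [Nat.div_div_eq_div_mul, Nat.div_div_eq_div_mul, mul_comm m n, Int.cast_mul, Int.cast_natCast]
  ring

lemma sum_mul_log_div_sub_eq_chebyshevConstant_mul (hc : floorSum L c L = 0) (t : ℝ) :
    ∑ m ∈ L.divisors, (c m : ℝ) * (t / m * Real.log (t / m) - t / m) =
      chebyshevConstant L c * t := by
  rcases eq_or_ne t 0 with rfl | ht
  · simp
  calc ∑ m ∈ L.divisors, (c m : ℝ) * (t / m * Real.log (t / m) - t / m)
      = ∑ m ∈ L.divisors, ((t * Real.log t - t) * (c m / m) - c m / m * Real.log m * t) := by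
        refine Finset.sum_congr rfl fun m hm => ?_
        have hm : (m : ℝ) ≠ 0 := Nat.cast_ne_zero.2 (Nat.pos_of_mem_divisors hm).ne'
        rw [Real.log_div ht hm]
        ring
    _ = chebyshevConstant L c * t := by
        rw [Finset.sum_sub_distrib, ← Finset.mul_sum, sum_weight_div_eq_zero hc, ← Finset.sum_mul,
          chebyshevConstant]
        ring

lemma abs_logFactorialSum_sub_le (hc : floorSum L c L = 0) (t : ℕ) :
    |logFactorialSum L c t - chebyshevConstant L c * t| ≤
      (∑ m ∈ L.divisors, |(c m : ℝ)|) * (1 + Real.log (t + 1)) := by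
  rw [← sum_mul_log_div_sub_eq_chebyshevConstant_mul hc, logFactorialSum,
    ← Finset.sum_sub_distrib, Finset.sum_mul]
  refine (Finset.abs_sum_le_sum_abs _ _).trans (Finset.sum_le_sum fun m hm => ?_)
  have hm : (1 : ℝ) ≤ m := by exact_mod_cast Nat.pos_of_mem_divisors hm
  rw [← mul_sub, abs_mul, ← Nat.floor_div_eq_div (K := ℝ)]
  gcongr
  calc _ ≤ 1 + Real.log ((t : ℝ) / m + 1) := abs_log_factorial_floor_sub_le (by positivity)
    _ ≤ 1 + Real.log (t + 1) := by
      gcongr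
      exact div_le_self t.cast_nonneg hm

lemma sum_range_psi (N : ℕ) :
    ∑ t ∈ Finset.range N, psi t = ∑ n ∈ Finset.Ioc 0 N, vonMangoldt n * ((N : ℝ) - n) := by
  induction N with
  | zero => simp
  | succ N ih =>
    rw [Finset.sum_range_succ, ih, Finset.sum_Ioc_succ_top N.zero_le, psi, Nat.floor_natCast,
      sub_self, mul_zero, add_zero, ← Finset.sum_add_distrib]
    refine Finset.sum_congr rfl fun n _ => ?_
    push_cast
    ring

lemma sum_range_logFactorialSum_le
    (hF : ∀ q : ℕ, 1 ≤ q → ∑ j ∈ Finset.range q, floorSum L c j ≤ A * (q - 1)) (N : ℕ) :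
    ∑ t ∈ Finset.range N, logFactorialSum L c t ≤ A * ∑ t ∈ Finset.range N, psi t := by
  calc ∑ t ∈ Finset.range N, logFactorialSum L c t
      = ∑ n ∈ Finset.Ioc 0 N,
          vonMangoldt n * ((∑ t ∈ Finset.range N, floorSum L c (t / n) : ℤ) : ℝ) := by
        rw [Finset.sum_congr rfl fun t ht =>
          logFactorialSum_eq_sum_vonMangoldt_mul_floorSum (Finset.mem_range.1 ht).le,
          Finset.sum_comm]
        simp only [Int.cast_sum, Finset.mul_sum]
    _ ≤ ∑ n ∈ Finset.Ioc 0 N, vonMangoldt n * ((A * (N - n) : ℤ) : ℝ) := by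
        gcongr with n hn
        · obtain ⟨hn, hnN⟩ := Finset.mem_Ioc.1 hn
          exact sum_range_div_le hn hnN hF
    _ = A * ∑ t ∈ Finset.range N, psi t := by
        rw [sum_range_psi, Finset.mul_sum]
        refine Finset.sum_congr rfl fun n _ => ?_
        push_cast
        ring

lemma chebyshevConstant_mul_sub_le_sum_range_logFactorialSum (hc : floorSum L c L = 0) (N : ℕ) :
    chebyshevConstant L c * (N * (N - 1) / 2)
        - (∑ m ∈ L.divisors, |(c m : ℝ)|) * (N * (1 + Real.log (N + 1))) ≤
      ∑ t ∈ Finset.range N, logFactorialSum L c t := by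
  have sum_cast : ∑ t ∈ Finset.range N, (t : ℝ) = N * (N - 1) / 2 := by
    rw [← Nat.cast_sum, Finset.sum_range_id, ← Nat.choose_two_right, Nat.cast_choose_two]
  calc _ = ∑ t ∈ Finset.range N, (chebyshevConstant L c * t
          - (∑ m ∈ L.divisors, |(c m : ℝ)|) * (1 + Real.log (N + 1))) := by
        rw [Finset.sum_sub_distrib, ← Finset.mul_sum, sum_cast, Finset.sum_const,
          Finset.card_range, nsmul_eq_mul]
        ring
    _ ≤ ∑ t ∈ Finset.range N, logFactorialSum L c t := by
        refine Finset.sum_le_sum fun t ht => ?_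
        have htN : (t : ℝ) ≤ N := by exact_mod_cast (Finset.mem_range.1 ht).le
        have hmono : (∑ m ∈ L.divisors, |(c m : ℝ)|) * (1 + Real.log (t + 1)) ≤
            (∑ m ∈ L.divisors, |(c m : ℝ)|) * (1 + Real.log (N + 1)) := by gcongr
        linarith [neg_le_of_abs_le (abs_logFactorialSum_sub_le hc t)]

lemma sum_range_floor_psi_le_integral {x : ℝ} (hx : 1 ≤ x) :
    ∑ t ∈ Finset.range ⌊x⌋₊, psi t ≤ ∫ t in (1 : ℝ)..x, psi t := by
  rw [Finset.range_eq_Ico, Finset.sum_eq_sum_Ico_succ_bot (Nat.floor_pos.2 hx), Nat.cast_zero,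
    Chebyshev.psi_zero, zero_add]
  simpa using sum_Ico_floor_le_integral Chebyshev.psi_mono Chebyshev.psi_nonneg (a := 1)
    (by simpa using hx)

lemma chebyshevConstant_mul_sub_le_integral_psi (hL : 0 < L) (hA : 0 ≤ A)
    (hc : floorSum L c L = 0)
    (hF : ∀ q ∈ Finset.Icc 1 L, ∑ j ∈ Finset.range q, floorSum L c j ≤ A * ((q : ℤ) - 1))
    {x : ℝ} (hx : 3 ≤ x) :
    chebyshevConstant L c * (x ^ 2 / 2)
        - (2 * |chebyshevConstant L c| + 3 * ∑ m ∈ L.divisors, |(c m : ℝ)|) * (x * Real.log x) ≤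
      A * ∫ t in (1 : ℝ)..x, psi t := by
  set κ := chebyshevConstant L c
  set K := ∑ m ∈ L.divisors, |(c m : ℝ)|
  set N := ⌊x⌋₊
  have one_le_log : 1 ≤ Real.log x := by
    rw [Real.le_log_iff_exp_le (by linarith)]
    linarith [Real.exp_one_lt_three]
  have main_term : κ * (x ^ 2 / 2) - 2 * |κ| * (x * Real.log x) ≤ κ * (N * (N - 1) / 2) := by
    have : |κ| * x ≤ |κ| * (x * Real.log x) := by
      gcongr
      exact le_mul_of_one_le_right (by linarith) one_le_log
    have : 0 ≤ |κ| * x := by positivity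
    linarith [mul_sq_sub_le_mul_floor_mul_floor_sub_one κ (by linarith : 0 ≤ x)]
  have error_term : K * (N * (1 + Real.log (N + 1))) ≤ K * (x * (3 * Real.log x)) := by
    gcongr
    · exact add_nonneg zero_le_one (Real.log_nonneg (by simp))
    · exact Nat.floor_le (by linarith)
    · linarith [log_floor_add_one_le_two_mul_log (by linarith : 2 ≤ x)]
  calc _ ≤ κ * (N * (N - 1) / 2) - K * (N * (1 + Real.log (N + 1))) := by linarith
    _ ≤ ∑ t ∈ Finset.range N, logFactorialSum L c t :=
        chebyshevConstant_mul_sub_le_sum_range_logFactorialSum hc N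
    _ ≤ A * ∑ t ∈ Finset.range N, psi t :=
        sum_range_logFactorialSum_le
          (sum_range_le_of_periodic hL hA (floorSum_periodic hc) hF) N
    _ ≤ A * ∫ t in (1 : ℝ)..x, psi t := by
        gcongr
        exact sum_range_floor_psi_le_integral (by linarith)

end ChebyshevMethod

section OptimalWeight

/-- Chebyshev weights on the divisors of `120`: `60` times (to clear denominators) the solution of
the linear programme that maximizes `chebyshevConstant 120 c` subject to `floorSum 120 c 120 = 0`
and `∑_{j < q} floorSum 120 c j ≤ q - 1` for `1 ≤ q ≤ 120`. -/
def optimalWeight : ℕ → ℤ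
  | 1 => 60
  | 2 => -60
  | 3 => -60
  | 5 => -60
  | 6 => 30
  | 8 => -30
  | 10 => 30
  | 12 => -40
  | 15 => 28
  | 20 => -33
  | 24 => 45
  | 30 => -48
  | 40 => 18
  | 60 => 16
  | 120 => -15
  | _ => 0

lemma divisors_one_hundred_twenty :
    Nat.divisors 120 = {1, 2, 3, 4, 5, 6, 8, 10, 12, 15, 20, 24, 30, 40, 60, 120} := by
  decide +kernel

lemma floorSum_optimalWeight_self : floorSum 120 optimalWeight 120 = 0 := by
  decide +kernel

lemma sum_range_floorSum_optimalWeight_le :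
    ∀ q ∈ Finset.Icc 1 120,
      ∑ j ∈ Finset.range q, floorSum 120 optimalWeight j ≤ 60 * ((q : ℤ) - 1) := by
  simp only [floorSum, divisors_one_hundred_twenty]
  decide +kernel

lemma log_two_pow_mul_three_pow_mul_five_pow (a b c : ℕ) :
    Real.log (2 ^ a * 3 ^ b * 5 ^ c) = a * Real.log 2 + b * Real.log 3 + c * Real.log 5 := by
  rw [Real.log_mul (by positivity) (by positivity), Real.log_mul (by positivity) (by positivity),
    Real.log_pow, Real.log_pow, Real.log_pow]

lemma chebyshevConstant_optimalWeight :
    chebyshevConstant 120 optimalWeight =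
      2261 / 60 * Real.log 2 + 321 / 20 * Real.log 3 + 235 / 24 * Real.log 5 := by
  have log6 := log_two_pow_mul_three_pow_mul_five_pow 1 1 0
  have log8 := log_two_pow_mul_three_pow_mul_five_pow 3 0 0
  have log10 := log_two_pow_mul_three_pow_mul_five_pow 1 0 1
  have log12 := log_two_pow_mul_three_pow_mul_five_pow 2 1 0
  have log15 := log_two_pow_mul_three_pow_mul_five_pow 0 1 1
  have log20 := log_two_pow_mul_three_pow_mul_five_pow 2 0 1
  have log24 := log_two_pow_mul_three_pow_mul_five_pow 3 1 0
  have log30 := log_two_pow_mul_three_pow_mul_five_pow 1 1 1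
  have log40 := log_two_pow_mul_three_pow_mul_five_pow 3 0 1
  have log60 := log_two_pow_mul_three_pow_mul_five_pow 2 1 1
  have log120 := log_two_pow_mul_three_pow_mul_five_pow 3 1 1
  norm_num at log6 log8 log10 log12 log15 log20 log24 log30 log40 log60 log120
  rw [chebyshevConstant, divisors_one_hundred_twenty]
  simp [optimalWeight, log6, log8, log10, log12, log15, log20, log24, log30, log40, log60, log120]
  ring

lemma le_chebyshevConstant_optimalWeight :
    60 * 0.9918 ≤ chebyshevConstant 120 optimalWeight := by
  rw [chebyshevConstant_optimalWeight]
  linarith [Real.log_two_gt_d9, Real.log_three_gt_d9, Real.log_five_gt_d9]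

end OptimalWeight

lemma chebyshevPsi_eq_psi : chebyshevPsi = Chebyshev.psi := rfl

theorem stmt1_general :
    ∃ C > 0, ∀ᶠ x : ℝ in atTop,
      0.9918 * (x ^ 2 / 2) - C * x * Real.log x ≤ ∫ t in (1 : ℝ)..x, chebyshevPsi t := by
  set κ := chebyshevConstant 120 optimalWeight
  set K := ∑ m ∈ Nat.divisors 120, |(optimalWeight m : ℝ)|
  have hκ : 60 * 0.9918 ≤ κ := le_chebyshevConstant_optimalWeight
  refine ⟨(2 * |κ| + 3 * K) / 60, by positivity, ?_⟩
  filter_upwards [eventually_ge_atTop 3] with x hx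
  have h := chebyshevConstant_mul_sub_le_integral_psi (by norm_num) (by norm_num)
    floorSum_optimalWeight_self sum_range_floorSum_optimalWeight_le hx
  rw [chebyshevPsi_eq_psi]
  push_cast at h
  have := mul_le_mul_of_nonneg_right hκ (by positivity : 0 ≤ x ^ 2 / 2)
  linarith

theorem stmt1 (w : ℝ → ℝ)
    (hw : ∀ x ∈ Set.Icc (0:ℝ) 1, w x = x ^ (0.195:ℝ) * (1 - x) ^ (0.195:ℝ)) :
    ∃ C > 0, ∀ᶠ x : ℝ in atTop,
      0.99035 * (x ^ 2 / 2) - C * x * Real.log x ^ 2 ≤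
        ∫ t in (1:ℝ)..x, chebyshevPsi t := by
  obtain ⟨C, hC, h⟩ := stmt1_general
  refine ⟨C, hC, ?_⟩
  filter_upwards [h, eventually_ge_atTop 0, Real.tendsto_log_atTop.eventually_ge_atTop 1]
    with x hx x_nonneg one_le_log
  refine le_trans ?_ hx
  gcongr
  · norm_num
  · exact le_self_pow₀ one_le_log two_ne_zero
end

section
/- Let n ∈ ℕ and let p ∈ ℤ[x] be a polynomial of degree at most n with ∫_0^1 p(x) dx ≠ 0. Then lcm(1,2,…,n+1) · |∫_0^1 p(x) dx| ≥ 1, and consequently ψ(n+1) ≥ −log |∫_0^1 p(x) dx| ≥ −log max_{x ∈ [0,1]} |p(x)|. -/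
open MeasureTheory Filter Set

/-!
Integrating `p = ∑ cᵢ xⁱ` termwise gives `∫₀¹ p = ∑ cᵢ / (i + 1)`, a rational number whose
denominator divides `lcm(1, …, n + 1)`. A nonzero such number has absolute value at least
`1 / lcm(1, …, n + 1) = exp (-ψ(n + 1))`.
-/

theorem chebyshevPsi_natCast (n : ℕ) : chebyshevPsi n = Real.log (Nat.lcmUpto n) :=
  Chebyshev.psi_eq_log_lcmUpto n

theorem neg_log_le_log_of_one_le_mul {x y : ℝ} (h : 1 ≤ x * y) : -Real.log y ≤ Real.log x := by
  have hxy : x * y ≠ 0 := (zero_lt_one.trans_le h).ne'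
  have hlog : 0 ≤ Real.log x + Real.log y := by
    rw [← Real.log_mul (left_ne_zero_of_mul hxy) (right_ne_zero_of_mul hxy)]
    exact Real.log_nonneg h
  linarith

theorem norm_intervalIntegral_le_sSup_mul {E : Type*} [NormedAddCommGroup E] [NormedSpace ℝ E]
    {f : ℝ → E} {a b : ℝ} (hab : a ≤ b) (hf : BddAbove ((fun x ↦ ‖f x‖) '' Icc a b)) :
    ‖∫ x in a..b, f x‖ ≤ sSup ((fun x ↦ ‖f x‖) '' Icc a b) * (b - a) := by
  rw [← abs_of_nonneg (sub_nonneg.2 hab)]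
  refine intervalIntegral.norm_integral_le_of_norm_le_const fun x hx ↦ ?_
  rw [uIoc_of_le hab] at hx
  exact le_csSup hf (mem_image_of_mem _ (Ioc_subset_Icc_self hx))

section PolynomialIntegral

open Polynomial

theorem intervalIntegral_aeval_eq_sum {R : Type*} [CommSemiring R] [Algebra R ℝ] (p : R[X])
    (a b : ℝ) :
    ∫ x in a..b, aeval x p =
      ∑ i ∈ p.support, algebraMap R ℝ (p.coeff i) * ((b ^ (i + 1) - a ^ (i + 1)) / (i + 1)) := by
  simp only [aeval_def, eval₂_eq_sum, Polynomial.sum]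
  rw [intervalIntegral.integral_finsetSum fun i _ ↦
    (by fun_prop : Continuous _).intervalIntegrable _ _]
  simp only [intervalIntegral.integral_const_mul, integral_pow]

theorem natCast_mul_intervalIntegral_aeval_mem_range_intCast {p : ℤ[X]} {L : ℕ}
    (hL : ∀ i ∈ p.support, i + 1 ∣ L) (a b : ℤ) :
    (L : ℝ) * ∫ x in (a : ℝ)..b, aeval x p ∈ (Int.castRingHom ℝ).range := by
  rw [intervalIntegral_aeval_eq_sum, Finset.mul_sum]
  refine sum_mem fun i hi ↦ ?_
  obtain ⟨c, rfl⟩ := hL i hi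
  refine ⟨c * p.coeff i * (b ^ (i + 1) - a ^ (i + 1)), ?_⟩
  simp only [eq_intCast, algebraMap_int_eq]
  push_cast
  field_simp

theorem one_le_natCast_mul_abs_intervalIntegral_aeval {p : ℤ[X]} {L : ℕ} (hL0 : L ≠ 0)
    (hL : ∀ i ∈ p.support, i + 1 ∣ L) {a b : ℤ}
    (hI : ∫ x in (a : ℝ)..b, aeval x p ≠ 0) :
    1 ≤ (L : ℝ) * |∫ x in (a : ℝ)..b, aeval x p| := by
  obtain ⟨z, hz⟩ := natCast_mul_intervalIntegral_aeval_mem_range_intCast hL a b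
  rw [eq_intCast] at hz
  have hz0 : z ≠ 0 := by
    rw [← Int.cast_ne_zero (α := ℝ), hz]
    exact mul_ne_zero (Nat.cast_ne_zero.2 hL0) hI
  calc (1 : ℝ) ≤ |(z : ℝ)| := by exact_mod_cast Int.one_le_abs hz0
    _ = L * |∫ x in (a : ℝ)..b, aeval x p| := by rw [hz, abs_mul, Nat.abs_cast]

theorem succ_dvd_lcmUpto_of_mem_support {R : Type*} [Semiring R] {p : R[X]} {n : ℕ}
    (hdeg : p.natDegree ≤ n) {i : ℕ} (hi : i ∈ p.support) : i + 1 ∣ Nat.lcmUpto (n + 1) := by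
  have hin : i ≤ n := (le_natDegree_of_mem_supp i hi).trans hdeg
  exact Finset.dvd_lcm (f := id) (Finset.mem_Icc.2 ⟨by lia, by lia⟩)

theorem one_le_lcmUpto_mul_abs_intervalIntegral_aeval {p : ℤ[X]} {n : ℕ}
    (hdeg : p.natDegree ≤ n) {a b : ℤ} (hI : ∫ x in (a : ℝ)..b, aeval x p ≠ 0) :
    1 ≤ (Nat.lcmUpto (n + 1) : ℝ) * |∫ x in (a : ℝ)..b, aeval x p| :=
  one_le_natCast_mul_abs_intervalIntegral_aeval (Nat.lcmUpto_ne_zero _)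
    (fun _ ↦ succ_dvd_lcmUpto_of_mem_support hdeg) hI

end PolynomialIntegral

theorem stmt13 (n : ℕ) (p : Polynomial ℤ) (hdeg : p.natDegree ≤ n)
    (I : ℝ) (hI : I = ∫ x in (0:ℝ)..1, Polynomial.aeval x p) (hI0 : I ≠ 0) :
    1 ≤ (((Finset.Icc 1 (n+1)).lcm id : ℕ) : ℝ) * |I| ∧
    -Real.log |I| ≤ chebyshevPsi (n+1) ∧
    -Real.log (sSup ((fun x => |Polynomial.aeval x p|) '' Set.Icc (0:ℝ) 1)) ≤ -Real.log |I| := by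
  have one_le_lcm_mul : 1 ≤ (Nat.lcmUpto (n + 1) : ℝ) * |I| := by
    rw [hI] at hI0 ⊢
    exact_mod_cast one_le_lcmUpto_mul_abs_intervalIntegral_aeval hdeg (a := 0) (b := 1)
      (by exact_mod_cast hI0)
  have abs_le_sup : |I| ≤ sSup ((fun x : ℝ ↦ |Polynomial.aeval x p|) '' Icc 0 1) := by
    simpa [hI] using norm_intervalIntegral_le_sSup_mul zero_le_one
      (isCompact_Icc.bddAbove_image p.continuous_aeval.norm.continuousOn)
  refine ⟨one_le_lcm_mul, ?_, neg_le_neg (Real.log_le_log (abs_pos.2 hI0) abs_le_sup)⟩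
  rw [← Nat.cast_add_one, chebyshevPsi_natCast]
  exact neg_log_le_log_of_one_le_mul one_le_lcm_mul
end
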